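/- Let G be a unified chain graph (UCG) over a finite vertex set V and let p = N(0, Σ) be a Gaussian distribution on ℝ^V with Σ positive definite. Then p satisfies Equation 1 (the chain-component factorization) and the zero restrictions of Equations 6–8 with respect to G if and only if p satisfies the block-recursive Markov property with respect to G: for every chain component K ∈ Cc(G) and every vertex i ∈ K, (B1) i ⊥_p Nd(K) ∖ K ∖ Fa(K) ∖ Mo(i) | Fa(K) ∪ Mo(i), (B2) i ⊥_p Nd(K) ∖ K ∖ Fa(i) ∖ Mo(K) | (K ∖ {i}) ∪ Fa(i) ∪ Mo(K), and (B3) i ⊥_p j | (K ∖ {i,j}) ∪ Pa(K) for all j ∈ K ∖ {i} with j ∉ Ne(i). -/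

import Mathlib

open Matrix MeasureTheory ProbabilityTheory

attribute [local instance] Classical.propDecidable

noncomputable section

variable {V : Type*}

/-- The submatrix of `S` with rows indexed by `X` and columns indexed by `Y`. -/
def msub (S : Matrix V V ℝ) (X Y : Finset V) : Matrix X Y ℝ :=
  Matrix.of fun i j => S i.1 j.1

/-- Conditional independence `X ⊥ Y | Z` for a centered Gaussian distribution with
positive definite covariance matrix `S`:  `Σ_{X,Y} − Σ_{X,Z} (Σ_{Z,Z})⁻¹ Σ_{Z,Y} = 0`. -/
def gaussCI [Fintype V] [DecidableEq V] (S : Matrix V V ℝ) (X Y Z : Finset V) : Prop :=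
  msub S X Y - msub S X Z * (msub S Z Z)⁻¹ * msub S Z Y = 0

/-- Pairwise disjointness of three sets. -/
def PDisj (X Y Z : Finset V) : Prop :=
  Disjoint X Y ∧ Disjoint X Z ∧ Disjoint Y Z

/-- Pairwise disjointness of four sets. -/
def PDisj4 (X Y W Z : Finset V) : Prop :=
  Disjoint X Y ∧ Disjoint X W ∧ Disjoint X Z ∧ Disjoint Y W ∧ Disjoint Y Z ∧ Disjoint W Z

/-- A graph with three kinds of edges: undirected (`undir`), solid directed (`solid`,
written `A → B`) and dashed directed (`dashed`, written `A ⇢ B`).  No axioms are imposed. -/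
structure PreGraph (V : Type*) where
  undir : V → V → Prop
  solid : V → V → Prop
  dashed : V → V → Prop

namespace PreGraph

variable (G : PreGraph V)

/-- There is an undirected edge between `a` and `b`. -/
def und (a b : V) : Prop := G.undir a b ∨ G.undir b a

/-- `a` and `b` are adjacent. -/
def adj (a b : V) : Prop :=
  G.und a b ∨ G.solid a b ∨ G.solid b a ∨ G.dashed a b ∨ G.dashed b a

/-- The edge between `a` and `b` is undirected or directed (solid or dashed) from `a` to `b`. -/
def fwd (a b : V) : Prop := G.und a b ∨ G.solid a b ∨ G.dashed a b

/-- A route in `G`: a sequence of nodes `nodes 0, nodes 1, …, nodes len` such that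
consecutive nodes are adjacent. -/
structure Route (G : PreGraph V) where
  len : ℕ
  nodes : ℕ → V
  adj_step : ∀ i < len, G.adj (nodes i) (nodes (i + 1))

/-- `c` is a collider node between `a` and `b`:  `a ⇢ c ⇠ b`, `a ⇢ c − b` (in either of the
two traversal directions) or `a ⇢ c ← b` (in either of the two traversal directions). -/
def colliderTriple (a c b : V) : Prop :=
  (G.dashed a c ∧ G.dashed b c) ∨
  (G.dashed a c ∧ G.und c b) ∨ (G.und a c ∧ G.dashed b c) ∨
  (G.dashed a c ∧ G.solid b c) ∨ (G.solid a c ∧ G.dashed b c)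

variable {G} in
/-- The node at position `k` of the route `ρ` is a collider node of `ρ`. -/
def Route.colliderNodeAt (ρ : G.Route) (k : ℕ) : Prop :=
  1 ≤ k ∧ k < ρ.len ∧ G.colliderTriple (ρ.nodes (k - 1)) (ρ.nodes k) (ρ.nodes (k + 1))

variable {G} in
/-- The positions `p, …, q` of `ρ` form a collider section of `ρ`, i.e. a maximal undirected
subroute `C1 − ⋯ − Cn` of `ρ` such that `A → C1 − ⋯ − Cn ← B` is a subroute of `ρ`. -/
def Route.colliderSectionOcc (ρ : G.Route) (p q : ℕ) : Prop :=
  1 ≤ p ∧ p ≤ q ∧ q + 1 ≤ ρ.len ∧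
  (∀ m, p ≤ m → m < q → G.und (ρ.nodes m) (ρ.nodes (m + 1))) ∧
  G.solid (ρ.nodes (p - 1)) (ρ.nodes p) ∧ G.solid (ρ.nodes (q + 1)) (ρ.nodes q)

variable {G} in
/-- The node at position `k` of `ρ` lies in a collider section of `ρ`. -/
def Route.inColliderSectionAt (ρ : G.Route) (k : ℕ) : Prop :=
  ∃ p q, ρ.colliderSectionOcc p q ∧ p ≤ k ∧ k ≤ q

variable {G} in
/-- The route `ρ` is `Z`-open: (i) all collider nodes are in `Z`, (ii) every collider
section contains some node of `Z`, and (iii) every node which is neither a collider node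
nor inside a collider section is outside `Z`. -/
def Route.IsZOpen (ρ : G.Route) (Z : Finset V) : Prop :=
  (∀ k, ρ.colliderNodeAt k → ρ.nodes k ∈ Z) ∧
  (∀ p q, ρ.colliderSectionOcc p q → ∃ m, p ≤ m ∧ m ≤ q ∧ ρ.nodes m ∈ Z) ∧
  (∀ k ≤ ρ.len, ¬ ρ.colliderNodeAt k → ¬ ρ.inColliderSectionAt k → ρ.nodes k ∉ Z)

variable {G} in
/-- A pure collider route (with at least one edge): every intermediate node is a collider
node or lies in a collider section of the route. -/
def Route.IsPureCollider (ρ : G.Route) : Prop :=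
  1 ≤ ρ.len ∧ ∀ k, 0 < k → k < ρ.len → ρ.colliderNodeAt k ∨ ρ.inColliderSectionAt k

/-- Separation `X ⊥_G Y | Z`: there is no `Z`-open route in `G` between a node of `X` and a
node of `Y`. -/
def Sep (X Y Z : Finset V) : Prop :=
  ¬ ∃ ρ : G.Route,
      ((ρ.nodes 0 ∈ X ∧ ρ.nodes ρ.len ∈ Y) ∨ (ρ.nodes 0 ∈ Y ∧ ρ.nodes ρ.len ∈ X)) ∧
      ρ.IsZOpen Z

section Finite

variable [Fintype V] [DecidableEq V]

/-- The fathers of `X`: nodes `b` with `b → a` in `G` for some `a ∈ X`. -/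
def fa (X : Finset V) : Finset V := Finset.univ.filter fun b => ∃ a ∈ X, G.solid b a

/-- The mothers of `X`: nodes `b` with `b ⇢ a` in `G` for some `a ∈ X`. -/
def mo (X : Finset V) : Finset V := Finset.univ.filter fun b => ∃ a ∈ X, G.dashed b a

/-- The parents of `X`. -/
def pa (X : Finset V) : Finset V := G.fa X ∪ G.mo X

/-- The neighbors of `X`: nodes `b` with `b − a` in `G` for some `a ∈ X`. -/
def nb (X : Finset V) : Finset V := Finset.univ.filter fun b => ∃ a ∈ X, G.und b a

/-- There is a descending route from `a` to `b`: all edges undirected or directed in the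
direction of travel, containing at least one directed edge. -/
def descends (a b : V) : Prop :=
  ∃ (n : ℕ) (f : ℕ → V), f 0 = a ∧ f n = b ∧ (∀ i < n, G.fwd (f i) (f (i + 1))) ∧
    ∃ i < n, G.solid (f i) (f (i + 1)) ∨ G.dashed (f i) (f (i + 1))

/-- The non-descendants of `X`. -/
def nd (X : Finset V) : Finset V := Finset.univ.filter fun b => ¬ ∃ a ∈ X, G.descends a b

/-- Connectivity by undirected routes. -/
def uconn : V → V → Prop := Relation.ReflTransGen G.und

/-- The chain component containing `i`. -/
def cc (i : V) : Finset V := Finset.univ.filter fun j => G.uconn i j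

/-- The set of chain components of `G`. -/
def ccs : Finset (Finset V) := Finset.univ.image G.cc

/-- The nodes incident to some edge of `G`. -/
def verts : Finset V := Finset.univ.filter fun a => ∃ b, G.adj a b

/-- `π` is a topological ordering of the chain components: it is constant on components and
increases along directed edges. -/
def IsTopoOrder (π : V → ℕ) : Prop :=
  (∀ a b, G.uconn a b → π a = π b) ∧ ∀ a b, G.solid a b ∨ G.dashed a b → π a < π b

/-- Equation 1: for every topological ordering of the chain components, each component `K`
is independent of the preceding components minus `Pa(K)` given `Pa(K)`. -/
def eq1 (S : Matrix V V ℝ) : Prop :=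
  ∀ π : V → ℕ, G.IsTopoOrder π → ∀ i : V,
    gaussCI S (G.cc i) ((Finset.univ.filter fun b => π b < π i) \ G.pa (G.cc i))
      (G.pa (G.cc i))

/-- The regression coefficients `β_K = Σ_{K,Pa(K)} (Σ_{Pa(K),Pa(K)})⁻¹`. -/
def beta (S : Matrix V V ℝ) (K : Finset V) : Matrix K (G.pa K) ℝ :=
  msub S K (G.pa K) * (msub S (G.pa K) (G.pa K))⁻¹

/-- The conditional covariance matrix `Λ_K`. -/
def lam (S : Matrix V V ℝ) (K : Finset V) : Matrix K K ℝ :=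
  msub S K K - msub S K (G.pa K) * (msub S (G.pa K) (G.pa K))⁻¹ * msub S (G.pa K) K

/-- The precision matrix `Ω = (Σ_{K ∪ Pa(K), K ∪ Pa(K)})⁻¹`. -/
def om (S : Matrix V V ℝ) (K : Finset V) : Matrix ↥(K ∪ G.pa K) ↥(K ∪ G.pa K) ℝ :=
  (msub S (K ∪ G.pa K) (K ∪ G.pa K))⁻¹

/-- Equation 6: `(β_K)_{i,j} = 0` for all `i ∈ K` and `j ∈ Mo(K) ∖ Mo(i)`. -/
def eq6 (S : Matrix V V ℝ) : Prop :=
  ∀ K ∈ G.ccs, ∀ i (hi : i ∈ K), ∀ j (hj : j ∈ G.pa K),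
    j ∈ G.mo K → j ∉ G.mo {i} → G.beta S K ⟨i, hi⟩ ⟨j, hj⟩ = 0

/-- Equation 7: `Ω_{i,j} = 0` for all `i ∈ K` and `j ∈ Fa(K) ∖ Fa(i)`. -/
def eq7 (S : Matrix V V ℝ) : Prop :=
  ∀ K ∈ G.ccs, ∀ i (hi : i ∈ K), ∀ j (hj : j ∈ G.pa K),
    j ∈ G.fa K → j ∉ G.fa {i} →
    G.om S K ⟨i, Finset.mem_union_left _ hi⟩ ⟨j, Finset.mem_union_right _ hj⟩ = 0

/-- Equation 8: `(Λ_K⁻¹)_{i,j} = 0` for all `i ∈ K` and `j ∈ K ∖ ({i} ∪ Ne(i))`. -/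
def eq8 (S : Matrix V V ℝ) : Prop :=
  ∀ K ∈ G.ccs, ∀ i (hi : i ∈ K), ∀ j (hj : j ∈ K),
    j ≠ i → j ∉ G.nb {i} → (G.lam S K)⁻¹ ⟨i, hi⟩ ⟨j, hj⟩ = 0

/-- `p` satisfies Equation 1 and the zero restrictions of Equations 6–8 w.r.t. `G`. -/
def eqs (S : Matrix V V ℝ) : Prop := G.eq1 S ∧ G.eq6 S ∧ G.eq7 S ∧ G.eq8 S

/-- The global Markov property with respect to `G`, for an abstract ternary
(conditional-independence) relation `I`. -/
def globalMP (I : Finset V → Finset V → Finset V → Prop) : Prop :=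
  ∀ X Y Z : Finset V, PDisj X Y Z → G.Sep X Y Z → I X Y Z

/-- The block-recursive Markov property (B1)–(B3) with respect to `G`. -/
def blockRecMP (I : Finset V → Finset V → Finset V → Prop) : Prop :=
  ∀ K ∈ G.ccs, ∀ i ∈ K,
    I {i} (((G.nd K \ K) \ G.fa K) \ G.mo {i}) (G.fa K ∪ G.mo {i}) ∧
    I {i} (((G.nd K \ K) \ G.fa {i}) \ G.mo K) ((K \ {i}) ∪ G.fa {i} ∪ G.mo K) ∧
    ∀ j ∈ K, j ≠ i → j ∉ G.nb {i} → I {i} {j} ((K \ {i, j}) ∪ G.pa K)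

/-- The pairwise Markov property (P1)–(P2) with respect to `G`. -/
def pairwiseMP (I : Finset V → Finset V → Finset V → Prop) : Prop :=
  ∀ i j : V, i ≠ j → ¬ G.adj i j → ∀ K ∈ G.ccs, i ∈ K →
    (j ∈ ((G.nd {i} \ K) \ G.fa K) \ G.mo {i} → I {i} {j} ((G.nd {i} \ K) \ {j})) ∧
    (j ∈ ((G.nd {i} \ {i}) \ G.fa {i}) \ G.mo K → I {i} {j} (G.nd {i} \ {i, j}))

/-- The local Markov property (L1)–(L2) with respect to `G`. -/
def localMP (I : Finset V → Finset V → Finset V → Prop) : Prop :=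
  ∀ K ∈ G.ccs, ∀ i ∈ K,
    I {i} (((G.nd {i} \ K) \ G.fa K) \ G.mo {i}) (G.fa K ∪ G.mo {i}) ∧
    I {i} ((((G.nd {i} \ {i}) \ G.pa {i}) \ G.nb {i}) \ G.mo (G.nb {i}))
      (G.pa {i} ∪ G.nb {i} ∪ G.mo (G.nb {i}))

/-- The subgraph `G^U`: it keeps the edge `A ⊸ B` (with its type and orientation) iff `G`
has a route `A ⊸ B ⊸ ⋯ ⊸ C` with `C ∈ U`, all edges undirected or directed in the
direction of travel, and no subroute `R ⇢ S − T`. -/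
def goodFrom (U : Finset V) (a b : V) : Prop :=
  ∃ (f : ℕ → V) (n : ℕ), 1 ≤ n ∧ f 0 = a ∧ f 1 = b ∧ f n ∈ U ∧
    (∀ i < n, G.fwd (f i) (f (i + 1))) ∧
    ∀ i, i + 2 ≤ n → ¬ (G.dashed (f i) (f (i + 1)) ∧ G.und (f (i + 1)) (f (i + 2)))

/-- The graph `G^U`. -/
def derived (U : Finset V) : PreGraph V where
  undir a b := G.undir a b ∧ G.goodFrom U a b
  solid a b := G.solid a b ∧ G.goodFrom U a b
  dashed a b := G.dashed a b ∧ G.goodFrom U a b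

/-- The set `Y'` used in Lemmas 2 and 3:
`Y' = {B' ∈ V(G^{X∪Y∪Z}) ∖ (X ∪ Z) : X ⊥_{G^{X∪Y∪Z}} B' | Z}`. -/
def derivedYp (X Y Z : Finset V) : Finset V :=
  ((G.derived (X ∪ Y ∪ Z)).verts \ (X ∪ Z)).filter fun b =>
    (G.derived (X ∪ Y ∪ Z)).Sep X {b} Z

/-- The set `X' = V(G^{X∪Y∪Z}) ∖ (Y' ∪ Z)` used in Lemmas 2 and 3. -/
def derivedXp (X Y Z : Finset V) : Finset V :=
  (G.derived (X ∪ Y ∪ Z)).verts \ (G.derivedYp X Y Z ∪ Z)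

end Finite

end PreGraph

/-- A chain graph: at most one edge between any pair of distinct nodes (undirected, solid
directed, or dashed directed) and no semidirected cycles. -/
structure ChainGraph (V : Type*) extends PreGraph V where
  undir_symm : ∀ a b, toPreGraph.undir a b → toPreGraph.undir b a
  undir_irrefl : ∀ a, ¬ toPreGraph.undir a a
  solid_irrefl : ∀ a, ¬ toPreGraph.solid a a
  dashed_irrefl : ∀ a, ¬ toPreGraph.dashed a a
  undir_not_solid : ∀ a b, toPreGraph.undir a b → ¬ toPreGraph.solid a b
  undir_not_dashed : ∀ a b, toPreGraph.undir a b → ¬ toPreGraph.dashed a b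
  solid_not_solid : ∀ a b, toPreGraph.solid a b → ¬ toPreGraph.solid b a
  solid_not_dashed : ∀ a b, toPreGraph.solid a b → ¬ toPreGraph.dashed a b
  solid_not_dashed_rev : ∀ a b, toPreGraph.solid a b → ¬ toPreGraph.dashed b a
  dashed_not_dashed : ∀ a b, toPreGraph.dashed a b → ¬ toPreGraph.dashed b a
  no_semidirected_cycle : ¬ ∃ (f : ℕ → V) (n : ℕ), 1 ≤ n ∧ f n = f 0 ∧
    (toPreGraph.solid (f 0) (f 1) ∨ toPreGraph.dashed (f 0) (f 1)) ∧
    ∀ i < n, toPreGraph.fwd (f i) (f (i + 1))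

namespace ChainGraph

variable (G : ChainGraph V)

/-- An LWF chain graph: no dashed directed edges. -/
def IsLWF : Prop := ∀ a b, ¬ G.toPreGraph.dashed a b

/-- An AMP chain graph: no solid directed edges. -/
def IsAMP : Prop := ∀ a b, ¬ G.toPreGraph.solid a b

/-- A unified chain graph: `Fa(K) ∩ Mo(K) = ∅` for every chain component `K`. -/
def IsUCG [Fintype V] [DecidableEq V] : Prop :=
  ∀ K ∈ G.toPreGraph.ccs, Disjoint (G.toPreGraph.fa K) (G.toPreGraph.mo K)

end ChainGraph


/-- The AMP chain graph obtained from `G` by deleting every solid directed edge. -/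
def ChainGraph.dropSolid (G : ChainGraph V) : ChainGraph V where
  undir := G.toPreGraph.undir
  solid _ _ := False
  dashed := G.toPreGraph.dashed
  undir_symm := G.undir_symm
  undir_irrefl := G.undir_irrefl
  solid_irrefl _ h := h
  dashed_irrefl := G.dashed_irrefl
  undir_not_solid _ _ _ h := h
  undir_not_dashed := G.undir_not_dashed
  solid_not_solid _ _ h := h.elim
  solid_not_dashed _ _ h := h.elim
  solid_not_dashed_rev _ _ h := h.elim
  dashed_not_dashed := G.dashed_not_dashed
  no_semidirected_cycle := fun ⟨f, n, hn, hcyc, hstart, hsteps⟩ =>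
    G.no_semidirected_cycle ⟨f, n, hn, hcyc, Or.inr (hstart.resolve_left id),
      fun i hi => (hsteps i hi).imp id (Or.imp False.elim id)⟩

/-- The restriction of `ω : V → ℝ` to the coordinates in `S`. -/
def marg (S : Finset V) : (V → ℝ) → (S → ℝ) := fun ω s => ω s.1

lemma marg_measurable (S : Finset V) : Measurable (marg (V := V) S) :=
  measurable_pi_lambda _ fun s => measurable_pi_apply s.1

/-- Conditional independence of the coordinate tuples indexed by `X` and `Y` given the
coordinate tuple indexed by `Z`, for a distribution `μ` on `ℝ^V`. -/
def mCI [Fintype V] (μ : Measure (V → ℝ)) [IsFiniteMeasure μ] (X Y Z : Finset V) : Prop :=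
  CondIndepFun (MeasurableSpace.comap (marg Z) inferInstance) ((marg_measurable Z).comap_le)
    (marg X) (marg Y) μ

/-- A probability distribution `μ` on `ℝ^V` satisfies the global Markov property with
respect to `G`. -/
def measGlobalMarkov [Fintype V] [DecidableEq V] (G : PreGraph V) (μ : Measure (V → ℝ))
    [IsFiniteMeasure μ] : Prop :=
  ∀ X Y Z : Finset V, PDisj X Y Z → G.Sep X Y Z → mCI μ X Y Z

/-- A graphoid over `V`: a ternary relation on pairwise disjoint subsets of `V` satisfying
symmetry, decomposition, weak union, contraction and intersection. -/
structure Graphoid (V : Type*) [DecidableEq V] where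
  rel : Finset V → Finset V → Finset V → Prop
  symmetry : ∀ X Y Z : Finset V, PDisj X Y Z → rel X Y Z → rel Y X Z
  decomposition : ∀ X Y W Z : Finset V, PDisj4 X Y W Z → rel X (Y ∪ W) Z → rel X Y Z
  weakUnion : ∀ X Y W Z : Finset V, PDisj4 X Y W Z → rel X (Y ∪ W) Z → rel X Y (Z ∪ W)
  contraction : ∀ X Y W Z : Finset V, PDisj4 X Y W Z →
    rel X Y (Z ∪ W) → rel X W Z → rel X (Y ∪ W) Z
  intersection : ∀ X Y W Z : Finset V, PDisj4 X Y W Z →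
    rel X Y (Z ∪ W) → rel X W (Z ∪ Y) → rel X (Y ∪ W) Z

/-- The conditional variance `Σ_{a,a|B} = Σ_{a,a} − Σ_{a,B} (Σ_{B,B})⁻¹ Σ_{B,a}`. -/
def condVar [Fintype V] [DecidableEq V] (S : Matrix V V ℝ) (a : V) (B : Finset V) : ℝ :=
  S a a - ∑ b₁ : B, ∑ b₂ : B, S a b₁.1 * (msub S B B)⁻¹ b₁ b₂ * S b₂.1 a
/-! Extend the vector of coefficients of the regression of a variable `i` on the variables in a set
`W` by zero to all of `V`. Then `X ⊥ Y | Z` says that the regression of each `i ∈ X` on `Z ∪ Y` only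
involves `Z`, and so all the conditions become statements about the vanishing of regression
coefficients.

For `i` in a component `K`, (B1) says that the regression of `i` on `Nd(K) ∖ K` only involves
`Fa(K) ∪ Mo(i)`: it only involves `Pa(K)`, which is Equation 1 because some topological ordering
puts exactly `Nd(K) ∖ K` before `K`, and there the coefficients of `Mo(K) ∖ Mo(i)` vanish, which is
Equation 6. Row `i` of the precision matrix of `K ∪ Pa(K)`, whose block on `K` is `Λ_K⁻¹`, is
proportional off the diagonal to the regression of `i` on the other variables of `K ∪ Pa(K)`; hence
Equation 8 is (B3). By weak union, Equation 1 also makes `i` independent of `Nd(K) ∖ K` given these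
other variables, which turns Equation 7 into (B2). -/

section Gaussian

variable {S : Matrix V V ℝ} {W X Y Z K P : Finset V} {i j : V}

lemma posDef_msub (hS : S.PosDef) (W : Finset V) : (msub S W W).PosDef :=
  hS.submatrix Subtype.val_injective

lemma extend_vecMul [Fintype V] (S : Matrix V V ℝ) (x : W → ℝ) (k : V) :
    (Function.extend Subtype.val x 0 ᵥ* S) k = ∑ w : W, x w * S w k := by
  refine (Fintype.sum_of_injective _ Subtype.val_injective _ _ (fun v hv => ?_) fun w => ?_).symm
  · rw [Function.extend_apply' _ _ _ hv, Pi.zero_apply, zero_mul]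
  · rw [Subtype.val_injective.extend_apply]

lemma eq_zero_of_vecMul_eq_zero_on [Fintype V] (hS : S.PosDef) {d : V → ℝ} (hd : ∀ v ∉ W, d v = 0)
    (h : ∀ k ∈ W, (d ᵥ* S) k = 0) : d = 0 := by
  by_contra hne
  have hpos := hS.dotProduct_mulVec_pos hne
  rw [Matrix.dotProduct_mulVec] at hpos
  refine hpos.ne' (Finset.sum_eq_zero fun k _ => ?_)
  by_cases hk : k ∈ W
  · simp [h k hk]
  · simp [hd k hk]

variable [DecidableEq V]

lemma isUnit_det_msub (hS : S.PosDef) (W : Finset V) : IsUnit (msub S W W).det :=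
  (Matrix.isUnit_iff_isUnit_det _).mp (posDef_msub hS W).isUnit

lemma inv_schurComplement_apply (hS : S.PosDef) (hKP : Disjoint K P) (i j : K) :
    (msub S K K - msub S K P * (msub S P P)⁻¹ * msub S P K)⁻¹ i j =
      (msub S (K ∪ P) (K ∪ P))⁻¹ ⟨i, Finset.mem_union_left _ i.2⟩
        ⟨j, Finset.mem_union_left _ j.2⟩ := by
  let e := Equiv.Finset.union K P hKP
  have hblocks : (msub S (K ∪ P) (K ∪ P)).submatrix e e =
      Matrix.fromBlocks (msub S K K) (msub S K P) (msub S P K) (msub S P P) := by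
    ext (a | a) (b | b) <;> rfl
  have hunit := ((posDef_msub hS (K ∪ P)).submatrix e.injective).isUnit
  rw [hblocks] at hunit
  let := (posDef_msub hS P).isUnit.invertible
  let := hunit.invertible
  let := (Matrix.isUnit_fromBlocks_iff_of_invertible₂₂.mp hunit).invertible
  have hinv := Matrix.invOf_fromBlocks₂₂_eq (msub S K K) (msub S K P) (msub S P K) (msub S P P)
  simp only [Matrix.invOf_eq_nonsing_inv] at hinv
  rw [← hblocks, Matrix.inv_submatrix_equiv] at hinv
  exact (congr_fun₂ hinv (.inl i) (.inl j)).symm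

/-- The coefficients `Σ_{i,W} (Σ_{W,W})⁻¹` of the regression of the variable `i` on the variables
in `W`, extended by zero so that regressions on different sets can be compared. -/
def regCoef (S : Matrix V V ℝ) (W : Finset V) (i : V) : V → ℝ :=
  Function.extend Subtype.val ((fun w : W => S i w) ᵥ* (msub S W W)⁻¹) 0

lemma regCoef_of_mem (S : Matrix V V ℝ) (i : V) (hj : j ∈ W) :
    regCoef S W i j = ((fun w : W => S i w) ᵥ* (msub S W W)⁻¹) ⟨j, hj⟩ :=
  Subtype.val_injective.extend_apply _ _ ⟨j, hj⟩

lemma regCoef_of_notMem (S : Matrix V V ℝ) (i : V) (hj : j ∉ W) : regCoef S W i j = 0 :=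
  Function.extend_apply' _ _ _ fun ⟨w, hw⟩ => hj (hw ▸ w.2)

lemma regCoef_vecMul_apply [Fintype V] (S : Matrix V V ℝ) (X Y Z : Finset V) (i : X) (k : Y) :
    (regCoef S Z i ᵥ* S) k = (msub S X Z * (msub S Z Z)⁻¹ * msub S Z Y) i k :=
  extend_vecMul S _ _

lemma regCoef_vecMul_of_mem [Fintype V] (hS : S.PosDef) (i : V) {k : V} (hk : k ∈ W) :
    (regCoef S W i ᵥ* S) k = S i k := by
  rw [regCoef_vecMul_apply S {i} W W ⟨i, Finset.mem_singleton_self i⟩ ⟨k, hk⟩,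
    Matrix.nonsing_inv_mul_cancel_right _ _ (isUnit_det_msub hS W)]
  rfl

lemma regCoef_eq [Fintype V] (hS : S.PosDef) {c : V → ℝ} (hc : ∀ v ∉ W, c v = 0)
    (h : ∀ k ∈ W, (c ᵥ* S) k = S i k) : regCoef S W i = c :=
  sub_eq_zero.mp <| eq_zero_of_vecMul_eq_zero_on (W := W) hS
    (fun v hv => by simp [regCoef_of_notMem S i hv, hc v hv])
    (fun k hk => by simp [Matrix.sub_vecMul, regCoef_vecMul_of_mem hS i hk, h k hk])

lemma regCoef_eq_of_subset [Finite V] (hS : S.PosDef) (hZW : Z ⊆ W)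
    (h : ∀ v ∉ Z, regCoef S W i v = 0) : regCoef S Z i = regCoef S W i := by
  cases nonempty_fintype V
  exact regCoef_eq hS h fun _ hk => regCoef_vecMul_of_mem hS i (hZW hk)

lemma regCoef_erase [Finite V] (hS : S.PosDef) (hi : i ∈ W) (hj : j ∈ W) (hji : j ≠ i) :
    regCoef S (W.erase i) i j =
      -((msub S W W)⁻¹ ⟨i, hi⟩ ⟨i, hi⟩)⁻¹ * (msub S W W)⁻¹ ⟨i, hi⟩ ⟨j, hj⟩ := by
  cases nonempty_fintype V
  set ω : V → ℝ := Function.extend Subtype.val ((msub S W W)⁻¹ ⟨i, hi⟩) 0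
  have hω (w : W) : ω w = (msub S W W)⁻¹ ⟨i, hi⟩ w := Subtype.val_injective.extend_apply _ _ w
  have hω_notMem (v : V) (hv : v ∉ W) : ω v = 0 :=
    Function.extend_apply' _ _ _ fun ⟨w, hw⟩ => hv (hw ▸ w.2)
  have hω_vecMul (k : V) (hk : k ∈ W) (hki : k ≠ i) : (ω ᵥ* S) k = 0 := by
    rw [extend_vecMul]
    have hmul := congr_fun₂ (Matrix.nonsing_inv_mul _ (isUnit_det_msub hS W)) ⟨i, hi⟩ ⟨k, hk⟩
    rwa [Matrix.one_apply_ne (by simpa using hki.symm)] at hmul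
  have hωi : ω i ≠ 0 := (hω ⟨i, hi⟩).trans_ne (posDef_msub hS W).inv.diag_pos.ne'
  have hreg : regCoef S (W.erase i) i = Pi.single i 1 - (ω i)⁻¹ • ω := by
    refine regCoef_eq hS (fun v hv => ?_) fun k hk => ?_
    · obtain rfl | hvi := eq_or_ne v i
      · simp [hωi]
      · simp [hvi, hω_notMem v fun hvW => hv (Finset.mem_erase.mpr ⟨hvi, hvW⟩)]
    · obtain ⟨hki, hkW⟩ := Finset.mem_erase.mp hk
      simp [Matrix.sub_vecMul, Matrix.smul_vecMul, hω_vecMul k hkW hki]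
  rw [hreg, ← hω ⟨i, hi⟩, ← hω ⟨j, hj⟩]
  simp [hji]

lemma inv_msub_apply_eq_zero_iff [Finite V] (hS : S.PosDef) (hi : i ∈ W) (hj : j ∈ W)
    (hji : j ≠ i) : (msub S W W)⁻¹ ⟨i, hi⟩ ⟨j, hj⟩ = 0 ↔ regCoef S (W.erase i) i j = 0 := by
  rw [regCoef_erase hS hi hj hji, mul_eq_zero, neg_eq_zero, inv_eq_zero,
    or_iff_right (posDef_msub hS W).inv.diag_pos.ne']

variable [Fintype V]

lemma gaussCI_iff_vecMul :
    gaussCI S X Y Z ↔ ∀ i ∈ X, ∀ k ∈ Y, (regCoef S Z i ᵥ* S) k = S i k := by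
  refine sub_eq_zero.trans ⟨fun h i hi k hk => ?_, fun h => Matrix.ext fun i k => ?_⟩
  · exact (regCoef_vecMul_apply S X Y Z ⟨i, hi⟩ ⟨k, hk⟩).trans (congr_fun₂ h _ _).symm
  · exact (h i i.2 k k.2).symm.trans (regCoef_vecMul_apply S X Y Z i k)

lemma gaussCI.mono {X' Y' : Finset V} (h : gaussCI S X Y Z) (hX : X' ⊆ X) (hY : Y' ⊆ Y) :
    gaussCI S X' Y' Z :=
  gaussCI_iff_vecMul.mpr fun i hi k hk => gaussCI_iff_vecMul.mp h i (hX hi) k (hY hk)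

lemma gaussCI_iff_forall_singleton : gaussCI S X Y Z ↔ ∀ i ∈ X, gaussCI S {i} Y Z := by
  simp only [gaussCI_iff_vecMul, Finset.mem_singleton, forall_eq]

lemma gaussCI.symm (hS : S.IsHermitian) (h : gaussCI S X Y Z) : gaussCI S Y X Z := by
  have htranspose (A B : Finset V) : (msub S A B)ᵀ = msub S B A :=
    Matrix.ext fun _ _ => hS.apply _ _
  have h' := congr_arg Matrix.transpose h
  simpa only [gaussCI, Matrix.transpose_sub, Matrix.transpose_mul, Matrix.transpose_nonsing_inv,
    htranspose, Matrix.transpose_zero, ← Matrix.mul_assoc] using h'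

lemma gaussCI_iff_regCoef (hS : S.PosDef) :
    gaussCI S X Y Z ↔ ∀ i ∈ X, ∀ v ∉ Z, regCoef S (Z ∪ Y) i v = 0 := by
  rw [gaussCI_iff_vecMul]
  refine forall₂_congr fun i _ => ⟨fun h v hv => ?_, fun h k hk => ?_⟩
  · have hreg : regCoef S (Z ∪ Y) i = regCoef S Z i := by
      refine regCoef_eq hS (fun v hv => ?_) fun k hk => ?_
      · exact regCoef_of_notMem S i fun hvZ => hv (Finset.mem_union_left Y hvZ)
      · exact (Finset.mem_union.mp hk).elim (regCoef_vecMul_of_mem hS i) (h k)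
    rw [hreg, regCoef_of_notMem S i hv]
  · rw [regCoef_eq_of_subset hS Finset.subset_union_left h]
    exact regCoef_vecMul_of_mem hS i (Finset.mem_union_right Z hk)

lemma gaussCI_congr_right (hS : S.PosDef) {Y' : Finset V} (h : Z ∪ Y = Z ∪ Y') :
    gaussCI S X Y Z ↔ gaussCI S X Y' Z := by
  rw [gaussCI_iff_regCoef hS, gaussCI_iff_regCoef hS, h]

lemma gaussCI_iff_of_subset_union (hS : S.PosDef) (hZW : Z ⊆ W) (hWY : W ⊆ Z ∪ Y) :
    gaussCI S X Y Z ↔ gaussCI S X Y W ∧ ∀ i ∈ X, ∀ j ∈ W \ Z, regCoef S W i j = 0 := by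
  have hU : W ∪ Y = Z ∪ Y := subset_antisymm
    (Finset.union_subset hWY Finset.subset_union_right) (Finset.union_subset_union_left hZW)
  have hreg (i : V) (h : ∀ v ∉ W, regCoef S (Z ∪ Y) i v = 0) :
      regCoef S W i = regCoef S (Z ∪ Y) i := regCoef_eq_of_subset hS hWY h
  rw [gaussCI_iff_regCoef hS, gaussCI_iff_regCoef hS, hU, ← forall₂_and]
  refine forall₂_congr fun i _ => ⟨fun h => ?_, fun ⟨hW, hWZ⟩ v hv => ?_⟩
  · have hW : ∀ v ∉ W, regCoef S (Z ∪ Y) i v = 0 := fun v hv => h v fun hvZ => hv (hZW hvZ)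
    exact ⟨hW, fun j hj => hreg i hW ▸ h j (Finset.mem_sdiff.mp hj).2⟩
  · by_cases hvW : v ∈ W
    · exact hreg i hW ▸ hWZ v (Finset.mem_sdiff.mpr ⟨hvW, hv⟩)
    · exact hW v hvW

lemma gaussCI.weakUnion (hS : S.PosDef) (h : gaussCI S X Y Z) (hZW : Z ⊆ W)
    (hWY : W ⊆ Z ∪ Y) : gaussCI S X Y W :=
  ((gaussCI_iff_of_subset_union hS hZW hWY).mp h).1

lemma gaussCI.singleton_erase (hS : S.PosDef) (h : gaussCI S K Y P) (hi : i ∈ K) (hiP : i ∉ P) :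
    gaussCI S {i} Y ((K ∪ P).erase i) := by
  have hweak : gaussCI S Y K ((K ∪ P).erase i) :=
    (h.symm hS.isHermitian).weakUnion hS
      (fun v hv => by simp [hv, ne_of_mem_of_not_mem hv hiP])
      (Finset.union_comm K P ▸ Finset.erase_subset i _)
  exact (hweak.symm hS.isHermitian).mono (Finset.singleton_subset_iff.mpr hi) subset_rfl

lemma gaussCI_singleton_singleton_iff (hS : S.PosDef) (hj : j ∉ Z) :
    gaussCI S {i} {j} Z ↔ regCoef S (insert j Z) i j = 0 := by
  rw [gaussCI_iff_regCoef hS, Finset.union_comm, ← Finset.insert_eq]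
  simp only [Finset.mem_singleton, forall_eq]
  refine ⟨fun h => h j hj, fun h v hv => ?_⟩
  obtain rfl | hvj := eq_or_ne v j
  · exact h
  · exact regCoef_of_notMem S i (by simp [hvj, hv])

end Gaussian

namespace PreGraph

variable {G : PreGraph V} {a b c : V}

/-- `G` has no semidirected cycles; such a cycle is a descending route from a node to itself. -/
def Acyclic (G : PreGraph V) : Prop := ∀ a, ¬ G.descends a a

lemma uconn_symm (h : G.uconn a b) : G.uconn b a := by
  induction h with
  | refl => exact .refl
  | tail _ hbc ih => exact ih.head hbc.symm

lemma descends_of_directed (h : G.solid a b ∨ G.dashed a b) : G.descends a b :=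
  ⟨1, fun k => if k = 0 then a else b, by simp, by simp, by simpa [fwd] using .inr h,
    0, by simpa using h⟩

lemma descends.trans_fwd (hab : G.descends a b) (hbc : G.fwd b c) : G.descends a c := by
  obtain ⟨n, f, rfl, rfl, hf, i, hi, hdir⟩ := hab
  refine ⟨n + 1, fun k => if k ≤ n then f k else c, by simp, by simp, fun k hk => ?_, i,
    hi.trans n.lt_succ_self, by simpa [hi, hi.le] using hdir⟩
  obtain hkn | rfl := Nat.lt_succ_iff_lt_or_eq.mp hk
  · simpa [hkn.le, hkn] using hf k hkn
  · simpa using hbc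

lemma descends.trans_uconn (hab : G.descends a b) (hbc : G.uconn b c) : G.descends a c := by
  induction hbc with
  | refl => exact hab
  | tail _ hcd ih => exact ih.trans_fwd (.inl hcd)

lemma IsTopoOrder.lt_of_descends {π : V → ℕ} (hπ : G.IsTopoOrder π) (h : G.descends a b) :
    π a < π b := by
  obtain ⟨n, f, rfl, rfl, hf, i, hi, hdir⟩ := h
  have hstep (k : ℕ) (hk : k < n) : π (f k) ≤ π (f (k + 1)) :=
    (hf k hk).elim (fun h => (hπ.1 _ _ (.single h)).le) fun h => (hπ.2 _ _ h).le
  have hmono : MonotoneOn (π ∘ f) (Set.Iic n) :=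
    monotoneOn_of_le_add_one Set.ordConnected_Iic fun k _ _ hk => hstep k hk
  calc π (f 0) ≤ π (f i) := hmono (Nat.zero_le n) hi.le (Nat.zero_le i)
    _ < π (f (i + 1)) := hπ.2 _ _ hdir
    _ ≤ π (f n) := hmono (Set.mem_Iic.mpr hi) (Set.mem_Iic.mpr le_rfl) hi

lemma IsTopoOrder.shift_compl {π : V → ℕ} (hπ : G.IsTopoOrder π) {N : Finset V}
    (hu : ∀ a b, G.uconn a b → b ∈ N → a ∈ N)
    (hd : ∀ a b, G.solid a b ∨ G.dashed a b → b ∈ N → a ∈ N) (m : ℕ) :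
    G.IsTopoOrder fun v => if v ∈ N then π v else π v + m := by
  refine ⟨fun a b hab => ?_, fun a b hab => ?_⟩
  · simp only [hπ.1 a b hab, show a ∈ N ↔ b ∈ N from ⟨hu b a (uconn_symm hab), hu a b hab⟩]
  · have hlt := hπ.2 a b hab
    have hN := hd a b hab
    dsimp only
    split_ifs <;> first | omega | tauto

section Finite

variable [Fintype V] {K : Finset V} {i : V}

lemma mem_cc : b ∈ G.cc a ↔ G.uconn a b := by simp [cc]

lemma mem_nd : b ∈ G.nd K ↔ ∀ a ∈ K, ¬ G.descends a b := by simp [nd]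

lemma mem_nd_of_fwd (hab : G.fwd a b) (hb : b ∈ G.nd K) : a ∈ G.nd K :=
  mem_nd.mpr fun k hk hka => mem_nd.mp hb k hk (hka.trans_fwd hab)

lemma mem_nd_of_uconn (hab : G.uconn a b) (hb : b ∈ G.nd K) : a ∈ G.nd K :=
  mem_nd.mpr fun k hk hka => mem_nd.mp hb k hk (hka.trans_uconn hab)

lemma mem_cc_of_uconn (hab : G.uconn a b) (ha : a ∈ G.cc i) : b ∈ G.cc i :=
  mem_cc.mpr ((mem_cc.mp ha).trans hab)

lemma fa_mono {K' : Finset V} (h : K ⊆ K') : G.fa K ⊆ G.fa K' := fun b hb => by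
  simp only [fa, Finset.mem_filter_univ] at hb ⊢
  exact hb.imp fun a ha => ⟨h ha.1, ha.2⟩

lemma mo_mono {K' : Finset V} (h : K ⊆ K') : G.mo K ⊆ G.mo K' := fun b hb => by
  simp only [mo, Finset.mem_filter_univ] at hb ⊢
  exact hb.imp fun a ha => ⟨h ha.1, ha.2⟩

lemma Acyclic.cc_subset_nd (hG : G.Acyclic) (i : V) : G.cc i ⊆ G.nd (G.cc i) := fun _ hb =>
  mem_nd.mpr fun a ha hab =>
    hG a (hab.trans_uconn ((uconn_symm (mem_cc.mp hb)).trans (mem_cc.mp ha)))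

/-- The number of nodes from which `v` descends; in an acyclic graph these numbers order the
chain components topologically. -/
def ancestorCount (G : PreGraph V) (v : V) : ℕ := (Finset.univ.filter fun a => G.descends a v).card

lemma Acyclic.isTopoOrder_ancestorCount (hG : G.Acyclic) : G.IsTopoOrder G.ancestorCount := by
  have hle (a b : V) (hab : G.uconn a b) : G.ancestorCount a ≤ G.ancestorCount b :=
    Finset.card_le_card <| Finset.monotone_filter_right _ fun _ _ h => h.trans_uconn hab
  refine ⟨fun a b hab => le_antisymm (hle a b hab) (hle b a (uconn_symm hab)), fun a b hab => ?_⟩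
  refine Finset.card_lt_card <| (Finset.ssubset_iff_of_subset <|
    Finset.monotone_filter_right _ fun _ _ h => h.trans_fwd (.inr hab)).mpr ⟨a, ?_, ?_⟩
  · simpa using descends_of_directed hab
  · simpa using hG a

variable [DecidableEq V]

lemma IsTopoOrder.filter_lt_subset {π : V → ℕ} (hπ : G.IsTopoOrder π) (i : V) :
    (Finset.univ.filter fun b => π b < π i) ⊆ G.nd (G.cc i) \ G.cc i := fun b hb => by
  have hbi : π b < π i := by simpa using hb
  refine Finset.mem_sdiff.mpr ⟨mem_nd.mpr fun a ha hab => ?_, fun hbK => ?_⟩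
  · exact (hbi.trans_eq (hπ.1 _ _ (mem_cc.mp ha))).not_gt (hπ.lt_of_descends hab)
  · exact hbi.ne' (hπ.1 _ _ (mem_cc.mp hbK))

lemma Acyclic.exists_isTopoOrder_filter_lt_eq (hG : G.Acyclic) (i : V) :
    ∃ π, G.IsTopoOrder π ∧
      (Finset.univ.filter fun b => π b < π i) = G.nd (G.cc i) \ G.cc i := by
  set N := G.nd (G.cc i) \ G.cc i with hN
  have hu (a b : V) (hab : G.uconn a b) (hb : b ∈ N) : a ∈ N := by
    rw [hN, Finset.mem_sdiff] at hb ⊢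
    exact ⟨mem_nd_of_uconn hab hb.1, fun ha => hb.2 (mem_cc_of_uconn hab ha)⟩
  have hd (a b : V) (hab : G.solid a b ∨ G.dashed a b) (hb : b ∈ N) : a ∈ N := by
    rw [hN, Finset.mem_sdiff] at hb ⊢
    exact ⟨mem_nd_of_fwd (.inr hab) hb.1, fun ha => mem_nd.mp hb.1 a ha (descends_of_directed hab)⟩
  have hiN : i ∉ N := by simp [hN, mem_cc.mpr (.refl : G.uconn i i)]
  have hπ := hG.isTopoOrder_ancestorCount.shift_compl hu hd (Fintype.card V + 1)
  refine ⟨_, hπ, subset_antisymm (hπ.filter_lt_subset i) fun b hb => ?_⟩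
  have hcard : G.ancestorCount b ≤ Fintype.card V := Finset.card_le_univ _
  simp only [Finset.mem_filter_univ, hb, hiN, if_true, if_false]
  omega

lemma Acyclic.pa_subset (hG : G.Acyclic) (hK : K ∈ G.ccs) : G.pa K ⊆ G.nd K \ K := fun b hb => by
  obtain ⟨i, -, rfl⟩ := Finset.mem_image.mp hK
  obtain ⟨a, ha, hba⟩ : ∃ a ∈ G.cc i, G.solid b a ∨ G.dashed b a := by
    simpa only [pa, fa, mo, Finset.mem_union, Finset.mem_filter_univ, ← exists_or,
      ← and_or_left] using hb
  have ha_nd := hG.cc_subset_nd i ha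
  exact Finset.mem_sdiff.mpr ⟨mem_nd_of_fwd (.inr hba) ha_nd,
    fun hbK => mem_nd.mp ha_nd b hbK (descends_of_directed hba)⟩

lemma Acyclic.disjoint_pa (hG : G.Acyclic) (hK : K ∈ G.ccs) : Disjoint K (G.pa K) :=
  Finset.disjoint_of_subset_right (hG.pa_subset hK) Finset.disjoint_sdiff

/-- The property (B1), for an abstract conditional independence relation `I`. -/
def blockRecB1 (G : PreGraph V) (I : Finset V → Finset V → Finset V → Prop) : Prop :=
  ∀ K ∈ G.ccs, ∀ i ∈ K, I {i} (((G.nd K \ K) \ G.fa K) \ G.mo {i}) (G.fa K ∪ G.mo {i})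

/-- The property (B2), for an abstract conditional independence relation `I`. -/
def blockRecB2 (G : PreGraph V) (I : Finset V → Finset V → Finset V → Prop) : Prop :=
  ∀ K ∈ G.ccs, ∀ i ∈ K,
    I {i} (((G.nd K \ K) \ G.fa {i}) \ G.mo K) ((K \ {i}) ∪ G.fa {i} ∪ G.mo K)

/-- The property (B3), for an abstract conditional independence relation `I`. -/
def blockRecB3 (G : PreGraph V) (I : Finset V → Finset V → Finset V → Prop) : Prop :=
  ∀ K ∈ G.ccs, ∀ i ∈ K, ∀ j ∈ K, j ≠ i → j ∉ G.nb {i} → I {i} {j} ((K \ {i, j}) ∪ G.pa K)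

lemma blockRecMP_iff {I : Finset V → Finset V → Finset V → Prop} :
    G.blockRecMP I ↔ G.blockRecB1 I ∧ G.blockRecB2 I ∧ G.blockRecB3 I := by
  simp only [blockRecMP, blockRecB1, blockRecB2, blockRecB3, forall_and]

variable {S : Matrix V V ℝ}

lemma Acyclic.eq1_iff (hG : G.Acyclic) (hS : S.PosDef) :
    G.eq1 S ↔ ∀ K ∈ G.ccs, gaussCI S K (G.nd K \ K) (G.pa K) := by
  simp only [eq1, ccs, Finset.forall_mem_image, Finset.mem_univ, true_imp_iff]
  have hsdiff (i : V) (Y : Finset V) :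
      gaussCI S (G.cc i) (Y \ G.pa (G.cc i)) (G.pa (G.cc i)) ↔
        gaussCI S (G.cc i) Y (G.pa (G.cc i)) :=
    gaussCI_congr_right hS Finset.union_sdiff_self_eq_union
  simp only [hsdiff]
  refine ⟨fun h i => ?_, fun h π hπ i => (@h i).mono subset_rfl (hπ.filter_lt_subset i)⟩
  obtain ⟨π, hπ, hN⟩ := hG.exists_isTopoOrder_filter_lt_eq i
  exact hN ▸ h π hπ i

lemma Acyclic.eq1_and_eq6_iff (hG : G.Acyclic)
    (hUCG : ∀ K ∈ G.ccs, Disjoint (G.fa K) (G.mo K)) (hS : S.PosDef) :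
    G.eq1 S ∧ G.eq6 S ↔ G.blockRecB1 (gaussCI S) := by
  rw [hG.eq1_iff hS, eq6, blockRecB1, ← forall₂_and]
  refine forall₂_congr fun K hK => ?_
  rw [gaussCI_iff_forall_singleton, ← forall₂_and]
  refine forall₂_congr fun i hi => ?_
  have hpa := hG.pa_subset hK
  have hmo : G.mo {i} ⊆ G.mo K := mo_mono (Finset.singleton_subset_iff.mpr hi)
  have hsub : G.fa K ∪ G.mo {i} ⊆ G.pa K := Finset.union_subset_union_right hmo
  have hcover : G.pa K ⊆ G.fa K ∪ G.mo {i} ∪ (((G.nd K \ K) \ G.fa K) \ G.mo {i}) := by grind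
  have hunion : G.pa K ∪ (((G.nd K \ K) \ G.fa K) \ G.mo {i}) = G.pa K ∪ (G.nd K \ K) := by grind
  have hsdiff (j : V) : j ∈ G.pa K \ (G.fa K ∪ G.mo {i}) ↔ j ∈ G.mo K ∧ j ∉ G.mo {i} := by
    have hfa_mo := hUCG K hK
    grind [pa, Finset.disjoint_left]
  rw [gaussCI_iff_of_subset_union hS hsub hcover, gaussCI_congr_right hS hunion]
  simp only [Finset.mem_singleton, forall_eq, hsdiff]
  refine and_congr_right' ⟨fun h j hj => ?_, fun h j hj hjmo hji => ?_⟩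
  · have hjpa : j ∈ G.pa K := Finset.mem_union_right _ hj.1
    exact (regCoef_of_mem S i hjpa).trans (h j hjpa hj.1 hj.2)
  · exact (regCoef_of_mem S i hj).symm.trans (h j ⟨hjmo, hji⟩)

lemma Acyclic.eq7_iff (hG : G.Acyclic) (hUCG : ∀ K ∈ G.ccs, Disjoint (G.fa K) (G.mo K))
    (hS : S.PosDef) (h1 : G.eq1 S) : G.eq7 S ↔ G.blockRecB2 (gaussCI S) := by
  refine forall₄_congr fun K hK i hi => ?_
  have hdisj := hG.disjoint_pa hK
  have hpa := hG.pa_subset hK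
  have hi_pa : i ∉ G.pa K := Finset.disjoint_left.mp hdisj hi
  have hne {j : V} (hj : j ∈ G.pa K) : j ≠ i := ne_of_mem_of_not_mem hj hi_pa
  have hfa : G.fa {i} ⊆ G.fa K := fa_mono (Finset.singleton_subset_iff.mpr hi)
  have hsub : K \ {i} ∪ G.fa {i} ∪ G.mo K ⊆ (K ∪ G.pa K).erase i := by grind [pa]
  have hcover : (K ∪ G.pa K).erase i ⊆
      K \ {i} ∪ G.fa {i} ∪ G.mo K ∪ (((G.nd K \ K) \ G.fa {i}) \ G.mo K) := by grind
  have hsdiff (j : V) : j ∈ (K ∪ G.pa K).erase i \ (K \ {i} ∪ G.fa {i} ∪ G.mo K) ↔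
      j ∈ G.fa K ∧ j ∉ G.fa {i} := by
    have hfa_mo := hUCG K hK
    grind [pa, Finset.disjoint_left]
  have hCI : gaussCI S {i} (((G.nd K \ K) \ G.fa {i}) \ G.mo K) ((K ∪ G.pa K).erase i) :=
    (((hG.eq1_iff hS).mp h1 K hK).singleton_erase hS hi hi_pa).mono subset_rfl
      (Finset.sdiff_subset.trans Finset.sdiff_subset)
  rw [gaussCI_iff_of_subset_union hS hsub hcover, and_iff_right hCI]
  simp only [Finset.mem_singleton, forall_eq, hsdiff, om]
  refine ⟨fun h j hj => ?_, fun h j hj hjfa hji => ?_⟩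
  · have hjpa : j ∈ G.pa K := Finset.mem_union_left _ hj.1
    exact (inv_msub_apply_eq_zero_iff hS _ _ (hne hjpa)).mp (h j hjpa hj.1 hj.2)
  · exact (inv_msub_apply_eq_zero_iff hS _ _ (hne hj)).mpr (h j ⟨hjfa, hji⟩)

lemma Acyclic.eq8_iff (hG : G.Acyclic) (hS : S.PosDef) :
    G.eq8 S ↔ G.blockRecB3 (gaussCI S) := by
  refine forall₄_congr fun K hK i hi => forall₄_congr fun j hj hji _ => ?_
  have hdisj := hG.disjoint_pa hK
  have hi_pa : i ∉ G.pa K := Finset.disjoint_left.mp hdisj hi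
  have hj_pa : j ∉ G.pa K := Finset.disjoint_left.mp hdisj hj
  have hins : insert j (K \ {i, j} ∪ G.pa K) = (K ∪ G.pa K).erase i := by grind
  rw [lam, inv_schurComplement_apply hS hdisj, inv_msub_apply_eq_zero_iff hS _ _ hji,
    gaussCI_singleton_singleton_iff hS (by simp [hj_pa]), hins]

end Finite

end PreGraph

lemma ChainGraph.acyclic (G : ChainGraph V) : G.toPreGraph.Acyclic := by
  rintro a ⟨n, f, h0, hn, hf, i, hi, hdir⟩
  have hpos : 0 < n := i.zero_le.trans_lt hi
  have hwrap (m : ℕ) : f ((m + 1) % n) = f (m % n + 1) := by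
    rw [← Nat.mod_add_mod]
    obtain hlt | heq := (Nat.succ_le_of_lt (m.mod_lt hpos)).lt_or_eq
    · rw [Nat.mod_eq_of_lt hlt]
    · rw [show m % n + 1 = n from heq, Nat.mod_self, h0, hn]
  refine G.no_semidirected_cycle ⟨fun k => f ((i + k) % n), n, hpos, by simp, ?_, fun k _ => ?_⟩
  · simpa [hwrap, Nat.mod_eq_of_lt hi] using hdir
  · simpa only [← add_assoc, hwrap] using hf _ (Nat.mod_lt _ hpos)

/-- **Theorem 4.** A Gaussian distribution `N(0, Σ)` with positive definite `Σ` satisfies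
Equation 1 and the zero restrictions of Equations 6–8 with respect to a UCG `G` if and only
if it satisfies the block-recursive Markov property with respect to `G`. -/
theorem ucg_zero_restrictions_iff_block_recursive_markov
    {V : Type*} [Fintype V] [DecidableEq V] (G : ChainGraph V) (hG : G.IsUCG)
    (S : Matrix V V ℝ) (hS : S.PosDef) :
    G.toPreGraph.eqs S ↔ G.toPreGraph.blockRecMP (gaussCI S) := by
  have hB1_iff := G.acyclic.eq1_and_eq6_iff hG hS
  rw [PreGraph.eqs, ← and_assoc, hB1_iff, G.acyclic.eq8_iff hS, PreGraph.blockRecMP_iff]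
  exact and_congr_right fun hB1 => and_congr_left' (G.acyclic.eq7_iff hG hS (hB1_iff.mpr hB1).1)
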